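/- arXiv:1711.01816 — 2 statements merged into one kernel-verified Lean document; each statement's English description precedes it below -/
import Mathlib

section
/- Every Z₂Z₄[ξ]-linear code C ⊆ R₂^r × R₄^s is permutation equivalent to a Z₂Z₄[ξ]-linear code in standard form: there exist nonnegative integers k₀, k₁, k₂, a permutation of the first r coordinates, a permutation of the last s coordinates, and matrices Ā₀₁, S with entries in R₂ and T, A₀₁, A₀₂, A₁₂ with entries in R₄, such that the permuted code is exactly the set of R₄-linear combinations (via the action *) of the rows of the block matrix G = [[I_{k₀}, Ā₀₁ | 0, 0, 2T], [0, S | I_{k₁}, A₀₁, A₀₂], [0, 0 | 0, 2I_{k₂}, 2A₁₂]], where the first two column blocks (r columns in total) have entries in R₂ and the last three column blocks (of widths k₁, k₂, s−k₁−k₂) have entries in R₄. -/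
set_option synthInstance.maxHeartbeats 1000000
set_option maxHeartbeats 2000000

noncomputable section
open Polynomial

abbrev Z4 : Type := ZMod 4
abbrev Z2 : Type := ZMod 2

/-- The mod 2 reduction map `Z₄ → Z₂`. -/
def bar : Z4 →+* Z2 := ZMod.castHom (m := 2) (by norm_num) Z2

/-- The ring `R₄ = Z₄[x]/⟨h⟩` (for `h` basic primitive, the Galois ring `GR(4,m)`). -/
abbrev R4 (h : Z4[X]) : Type := Z4[X] ⧸ Ideal.span {h}

/-- The ring `R₂ = Z₂[x]/⟨h̄⟩` (for `h` basic primitive, the field `F_{2^m}`). -/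
abbrev R2 (h : Z4[X]) : Type := Z2[X] ⧸ Ideal.span {h.map bar}

/-- `ξ`, the class of `x` in `R₄`. -/
def xi (h : Z4[X]) : R4 h := Ideal.Quotient.mk _ X

/-- `ξ̄`, the class of `x` in `R₂`. -/
def xibar (h : Z4[X]) : R2 h := Ideal.Quotient.mk _ X

/-- The coefficientwise mod 2 reduction `R₄ → R₂`. -/
def barR (h : Z4[X]) : R4 h →+* R2 h :=
  Ideal.quotientMap (Ideal.span {h.map bar}) (Polynomial.mapRingHom bar)
    (by
      rw [Ideal.span_le]
      intro p hp
      simp only [Set.mem_singleton_iff] at hp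
      subst hp
      exact Ideal.mem_comap.mpr (Ideal.subset_span (by simp)))

/-- The canonical representative (of degree `< deg h`) of an element of `R₄`. -/
def rep4 (h : Z4[X]) (α : R4 h) : Z4[X] := Quotient.out α %ₘ h

/-- The canonical representative (of degree `< deg h̄`) of an element of `R₂`. -/
def rep2 (h : Z4[X]) (α : R2 h) : Z2[X] := Quotient.out α %ₘ (h.map bar)

/-- The Frobenius map `θ₄ : ∑ vᵢ ξ^i ↦ ∑ vᵢ ξ^{2i}` of `R₄`, as a bare function:
substitute `ξ²` in the canonical representative. -/
def thetaFun4 (h : Z4[X]) (α : R4 h) : R4 h := Polynomial.aeval (xi h ^ 2) (rep4 h α)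

/-- The Frobenius map `θ₂ : ∑ vᵢ ξ̄^i ↦ ∑ vᵢ ξ̄^{2i}` of `R₂`, as a bare function. -/
def thetaFun2 (h : Z4[X]) (α : R2 h) : R2 h := Polynomial.aeval (xibar h ^ 2) (rep2 h α)

/-- A lift `ι : R₂ → R₄` with `ι` mod 2 the identity: lift the coefficients of the
canonical representative from `{0,1}`. -/
def iota (h : Z4[X]) (α : R2 h) : R4 h :=
  Ideal.Quotient.mk _ ((rep2 h α).sum fun i a => C ((a.val : Z4)) * X ^ i)

/-- `h` is a monic basic primitive polynomial of degree `m`:  `h` is monic, its mod 2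
reduction `h̄` is irreducible over `Z₂`, and the root `ξ̄` of `h̄` is a primitive
element, i.e. has multiplicative order `2^m - 1`. -/
def BasicPrimitive (h : Z4[X]) (m : ℕ) : Prop :=
  h.Monic ∧ h.natDegree = m ∧ Irreducible (h.map bar) ∧ orderOf (xibar h) = 2 ^ m - 1

/-- The scalar multiplication `γ * (α,β) = (γ̄α, γβ)` making `R₂^r × R₄^s` (or any
mixed-alphabet tuple space) an `R₄`-module. -/
def smulStar (h : Z4[X]) {α β : Type*} (γ : R4 h) (v : (α → R2 h) × (β → R4 h)) :
    (α → R2 h) × (β → R4 h) :=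
  (fun i => barR h γ * v.1 i, fun j => γ * v.2 j)


/-- A `Z₂Z₄[ξ]`-linear code: an `R₄`-submodule of `R₂^r × R₄^s` (as a set). -/
def IsZ2Z4Linear (h : Z4[X]) {r s : ℕ} (C : Set ((Fin r → R2 h) × (Fin s → R4 h))) : Prop :=
  0 ∈ C ∧ (∀ u ∈ C, ∀ v ∈ C, u + v ∈ C) ∧ ∀ γ : R4 h, ∀ u ∈ C, smulStar h γ u ∈ C

/-! ### Standard generator and parity-check matrices -/

/-- The set of all `R₄`-linear combinations (via the action `*`) of a finite family of
rows in `R₂^α × R₄^β`. -/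
def rowSpan (h : Z4[X]) {ι α β : Type*} [Fintype ι]
    (rows : ι → (α → R2 h) × (β → R4 h)) : Set ((α → R2 h) × (β → R4 h)) :=
  {v | ∃ c : ι → R4 h, v = ∑ i, smulStar h (c i) (rows i)}

/-- The rows of the standard form generator matrix
`G = [[I_{k₀}, Ā₀₁ | 0, 0, 2T], [0, S | I_{k₁}, A₀₁, A₀₂], [0, 0 | 0, 2I_{k₂}, 2A₁₂]]`. -/
def stdGenRows (h : Z4[X]) {r s k0 k1 k2 : ℕ}
    (A01b : Matrix (Fin k0) (Fin (r - k0)) (R2 h))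
    (S : Matrix (Fin k1) (Fin (r - k0)) (R2 h))
    (T : Matrix (Fin k0) (Fin (s - k1 - k2)) (R4 h))
    (A01 : Matrix (Fin k1) (Fin k2) (R4 h))
    (A02 : Matrix (Fin k1) (Fin (s - k1 - k2)) (R4 h))
    (A12 : Matrix (Fin k2) (Fin (s - k1 - k2)) (R4 h)) :
    (Fin k0 ⊕ Fin k1 ⊕ Fin k2) →
      ((Fin k0 ⊕ Fin (r - k0)) → R2 h) × ((Fin k1 ⊕ Fin k2 ⊕ Fin (s - k1 - k2)) → R4 h) :=
  fun row =>
    (fun col =>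
      match row, col with
      | .inl i, .inl j => if i = j then 1 else 0
      | .inl i, .inr j => A01b i j
      | .inr (.inl i), .inr j => S i j
      | _, _ => 0,
     fun col =>
      match row, col with
      | .inl i, .inr (.inr j) => 2 * T i j
      | .inr (.inl i), .inl j => if i = j then 1 else 0
      | .inr (.inl i), .inr (.inl j) => A01 i j
      | .inr (.inl i), .inr (.inr j) => A02 i j
      | .inr (.inr i), .inr (.inl j) => if i = j then 2 else 0
      | .inr (.inr i), .inr (.inr j) => 2 * A12 i j
      | _, _ => 0)

/-- `C` is (permutation equivalent to) a code of type `(r,s;k₀;k₁,k₂)`:  after a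
permutation of the first `r` and of the last `s` coordinates (encoded by the
relabelings `e2`, `e4`) the code is exactly the `R₄`-span of the rows of the standard
form generator matrix. -/
def IsTypeCode (h : Z4[X]) (r s k0 k1 k2 : ℕ)
    (C : Set ((Fin r → R2 h) × (Fin s → R4 h))) : Prop :=
  ∃ (A01b : Matrix (Fin k0) (Fin (r - k0)) (R2 h))
    (S : Matrix (Fin k1) (Fin (r - k0)) (R2 h))
    (T : Matrix (Fin k0) (Fin (s - k1 - k2)) (R4 h))
    (A01 : Matrix (Fin k1) (Fin k2) (R4 h))
    (A02 : Matrix (Fin k1) (Fin (s - k1 - k2)) (R4 h))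
    (A12 : Matrix (Fin k2) (Fin (s - k1 - k2)) (R4 h))
    (e2 : Fin r ≃ (Fin k0 ⊕ Fin (r - k0)))
    (e4 : Fin s ≃ (Fin k1 ⊕ Fin k2 ⊕ Fin (s - k1 - k2))),
    (fun v : (Fin r → R2 h) × (Fin s → R4 h) => (v.1 ∘ e2.symm, v.2 ∘ e4.symm)) '' C
      = rowSpan h (stdGenRows h A01b S T A01 A02 A12)

/-- The inner product
`⟨u,v⟩ = 2 ∑ᵢ ι(aᵢdᵢ) + ∑ⱼ bⱼeⱼ ∈ R₄` on `R₂^α × R₄^β`. -/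
def innerP (h : Z4[X]) {α β : Type*} [Fintype α] [Fintype β]
    (u v : (α → R2 h) × (β → R4 h)) : R4 h :=
  2 * ∑ i, iota h (u.1 i * v.1 i) + ∑ j, u.2 j * v.2 j

/-- The dual code `C⊥ = {v : ⟨u,v⟩ = 0 for all u ∈ C}`. -/
def dualCode (h : Z4[X]) {α β : Type*} [Fintype α] [Fintype β]
    (C : Set ((α → R2 h) × (β → R4 h))) : Set ((α → R2 h) × (β → R4 h)) :=
  {v | ∀ u ∈ C, innerP h u v = 0}

/-- The rows of the standard form parity-check matrix
`H = [[−Ā₀₁ᵀ, I_{r−k₀} | −2Sᵀ, 0, 0], [−Tᵀ, 0 | −A₀₂ᵀ + A₁₂ᵀA₀₁ᵀ, −A₁₂ᵀ, I_{s−k₁−k₂}],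
[0, 0 | −2A₀₁ᵀ, 2I_{k₂}, 0]]`. -/
def stdParityRows (h : Z4[X]) {r s k0 k1 k2 : ℕ}
    (A01b : Matrix (Fin k0) (Fin (r - k0)) (R2 h))
    (S : Matrix (Fin k1) (Fin (r - k0)) (R2 h))
    (T : Matrix (Fin k0) (Fin (s - k1 - k2)) (R4 h))
    (A01 : Matrix (Fin k1) (Fin k2) (R4 h))
    (A02 : Matrix (Fin k1) (Fin (s - k1 - k2)) (R4 h))
    (A12 : Matrix (Fin k2) (Fin (s - k1 - k2)) (R4 h)) :
    (Fin (r - k0) ⊕ Fin (s - k1 - k2) ⊕ Fin k2) →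
      ((Fin k0 ⊕ Fin (r - k0)) → R2 h) × ((Fin k1 ⊕ Fin k2 ⊕ Fin (s - k1 - k2)) → R4 h) :=
  fun row =>
    (fun col =>
      match row, col with
      | .inl i, .inl j => -(A01b j i)
      | .inl i, .inr j => if i = j then 1 else 0
      | .inr (.inl i), .inl j => -(barR h (T j i))
      | _, _ => 0,
     fun col =>
      match row, col with
      | .inl i, .inl j => -(2 * iota h (S j i))
      | .inr (.inl i), .inl j => -(A02 j i) + ∑ c, A12 c i * A01 j c
      | .inr (.inl i), .inr (.inl j) => -(A12 j i)
      | .inr (.inl i), .inr (.inr j) => if i = j then 1 else 0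
      | .inr (.inr i), .inl j => -(2 * A01 j i)
      | .inr (.inr i), .inr (.inl j) => if i = j then 2 else 0
      | _, _ => 0)

/-- Pivot selection: a maximal family of elements of `N` dual to some of the functionals. -/
theorem pivot_aux {R M L ι : Type*} [CommRing R] [AddCommGroup M] [Module R M]
    [AddCommGroup L] [Module R L] [Finite ι] (f : ι → M →ₗ[R] L) (e : L) (he : e ≠ 0)
    (N : Submodule R M) (hN : ∀ v ∈ N, ∀ j, ∃ a : R, f j v = a • e) :
    ∃ (k : ℕ) (p : Fin k → ι) (w : Fin k → M), Function.Injective p ∧ (∀ i, w i ∈ N) ∧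
      (∀ i j, f (p j) (w i) = if i = j then e else 0) ∧
      ∀ v ∈ N, (∀ j, f (p j) v = 0) → ∀ j, ¬ ∃ c : R, c • f j v = e := by
  classical
  haveI := Fintype.ofFinite ι
  let Q : ℕ → Prop := fun k => ∃ (p : Fin k → ι) (w : Fin k → M), (∀ i, w i ∈ N) ∧
      (∀ i j, f (p j) (w i) = if i = j then e else 0)
  have inj : ∀ (k : ℕ) (p : Fin k → ι) (w : Fin k → M),
      (∀ i j, f (p j) (w i) = if i = j then e else 0) → Function.Injective p := by
    intro k p w hw i j hij
    by_contra hne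
    have h1 := hw i i
    have h2 := hw i j
    rw [← hij, h1] at h2
    simp [hne, he] at h2
  have hb : ∀ k, Q k → k ≤ Fintype.card ι := by
    rintro k ⟨p, w, _, hw⟩
    simpa using Fintype.card_le_of_injective p (inj k p w hw)
  have h0 : Q 0 := ⟨Fin.elim0, Fin.elim0, fun i => i.elim0, fun i => i.elim0⟩
  let k := Nat.findGreatest Q (Fintype.card ι)
  have hk : Q k := Nat.findGreatest_spec (Nat.zero_le _) h0
  obtain ⟨p, w, hwN, hw⟩ := hk
  refine ⟨k, p, w, inj k p w hw, hwN, hw, ?_⟩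
  rintro v hv hz j ⟨c, hc⟩
  have hQ : Q (k + 1) := by
    choose a ha using fun i => hN (w i) (hwN i) j
    refine ⟨Fin.cons j p, Fin.cons (c • v) (fun i => w i - a i • (c • v)), ?_, ?_⟩
    · intro i
      refine Fin.cases ?_ (fun i => ?_) i
      · exact N.smul_mem _ hv
      · exact N.sub_mem (hwN i) (N.smul_mem _ (N.smul_mem _ hv))
    · intro i l
      refine Fin.cases ?_ (fun i => ?_) i <;> refine Fin.cases ?_ (fun l => ?_) l
      · simp [hc]
      · simp [hz, (Fin.succ_ne_zero _).symm]
      · simp [hc, ha]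
      · simp [hz, hw]
  have := Nat.le_findGreatest (hb _ hQ) hQ
  change k + 1 ≤ k at this
  omega

theorem equiv_aux {n : ℕ} {α : Type*} [Fintype α] (g : α → Fin n) (hg : Function.Injective g)
    (l : ℕ) (hl : n - Fintype.card α = l) : ∃ e : Fin n ≃ α ⊕ Fin l, ∀ a, e.symm (.inl a) = g a := by
  classical
  have hc : Fintype.card ↥(Set.range g)ᶜ = l := by
    rw [Fintype.card_compl_set, Fintype.card_fin, Set.card_range_of_injective hg, hl]
  let e := (Equiv.Set.sumCompl (Set.range g)).symm.trans
    (Equiv.sumCongr (Equiv.ofInjective g hg).symm (Fintype.equivFinOfCardEq hc))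
  exact ⟨e, fun a => by simp [e]⟩

theorem standard_aux {R K : Type*} [CommRing R] [Field K] [Algebra R K]
    (hsurj : Function.Surjective (algebraMap R K))
    (hker : ∀ x : R, algebraMap R K x = 0 → ∃ y, x = 2 * y)
    (h4 : (4 : R) = 0) (h2 : (2 : R) ≠ 0) (r s : ℕ)
    (C : Submodule R ((Fin r → K) × (Fin s → R))) :
    ∃ (k0 k1 k2 : ℕ) (p0 : Fin k0 → Fin r) (p1 : Fin k1 → Fin s) (p2 : Fin k2 → Fin s)
      (w0 : Fin k0 → (Fin r → K) × (Fin s → R)) (w1 : Fin k1 → (Fin r → K) × (Fin s → R))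
      (w2 : Fin k2 → (Fin r → K) × (Fin s → R)),
      Function.Injective p0 ∧ Function.Injective (Sum.elim p1 p2) ∧
      (∀ i j, (w0 i).1 (p0 j) = if i = j then 1 else 0) ∧ (∀ i j, (w0 i).2 (p1 j) = 0) ∧
      (∀ i j, (w0 i).2 (p2 j) = 0) ∧ (∀ i j, ∃ y, (w0 i).2 j = 2 * y) ∧
      (∀ i j, (w1 i).1 (p0 j) = 0) ∧ (∀ i j, (w1 i).2 (p1 j) = if i = j then 1 else 0) ∧
      (∀ i, (w2 i).1 = 0) ∧ (∀ i j, (w2 i).2 (p1 j) = 0) ∧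
      (∀ i j, (w2 i).2 (p2 j) = if i = j then 2 else 0) ∧ (∀ i j, ∃ y, (w2 i).2 j = 2 * y) ∧
      ∀ v, v ∈ C ↔ ∃ (c0 : Fin k0 → R) (c1 : Fin k1 → R) (c2 : Fin k2 → R),
        v = ∑ i, c0 i • w0 i + (∑ i, c1 i • w1 i + ∑ i, c2 i • w2 i) := by
  classical
  let M := (Fin r → K) × (Fin s → R)
  let f : Fin s → M →ₗ[R] R := fun j => (LinearMap.proj j) ∘ₗ (LinearMap.snd R _ _)
  let g : Fin r → M →ₗ[R] K := fun j => (LinearMap.proj j) ∘ₗ (LinearMap.fst R _ _)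
  have hf : ∀ j (v : M), f j v = v.2 j := fun _ _ => rfl
  have hg : ∀ j (v : M), g j v = v.1 j := fun _ _ => rfl
  -- inverses modulo 2
  have hinv : ∀ x : R, algebraMap R K x ≠ 0 → ∃ c y : R, c * x = 1 + 2 * y := by
    intro x hx
    obtain ⟨c, hc⟩ := hsurj (algebraMap R K x)⁻¹
    obtain ⟨y, hy⟩ := hker (c * x - 1) (by simp [hc, hx])
    exact ⟨c, y, by linear_combination hy⟩
  have hR1 : (1 : R) ≠ 0 := fun hh => h2 (by linear_combination 2 * hh)
  obtain ⟨k1, p1, u1, hp1, hu1, hd1, hm1⟩ := pivot_aux f 1 hR1 C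
    (fun v _ j => ⟨v.2 j, by simp [hf]⟩)
  let N1 : Submodule R M := C ⊓ ⨅ j, LinearMap.ker (f (p1 j))
  have memN1 : ∀ v, v ∈ N1 ↔ v ∈ C ∧ ∀ j, v.2 (p1 j) = 0 := by
    intro v; simp [N1, hf]
  have ev1 : ∀ v ∈ N1, ∀ j, ∃ y, v.2 j = 2 * y := by
    intro v hv j
    obtain ⟨hvC, hz⟩ := (memN1 v).1 hv
    apply hker
    by_contra hne
    obtain ⟨c, y, hcy⟩ := hinv _ hne
    refine hm1 v hvC hz j ⟨(1 - 2 * y) * c, ?_⟩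
    rw [hf, smul_eq_mul]
    linear_combination (1 - 2 * y) * hcy - y ^ 2 * h4
  let N2 : Submodule R M := N1 ⊓ ⨅ j, LinearMap.ker (g j)
  have memN2 : ∀ v, v ∈ N2 ↔ v ∈ N1 ∧ v.1 = 0 := by
    intro v; simp [N2, hg, funext_iff]
  obtain ⟨k2, p2, w2, hp2, hw2, hd2, hm2⟩ := pivot_aux f 2 h2 N2
    (fun v hv j => by
      obtain ⟨y, hy⟩ := ev1 v ((memN2 v).1 hv).1 j
      exact ⟨y, by rw [hf, hy, smul_eq_mul]; ring⟩)
  let N3 : Submodule R M := N1 ⊓ ⨅ j, LinearMap.ker (f (p2 j))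
  have memN3 : ∀ v, v ∈ N3 ↔ v ∈ N1 ∧ ∀ j, v.2 (p2 j) = 0 := by
    intro v; simp [N3, hf]
  obtain ⟨k0, p0, w0, hp0, hw0, hd0, hm0⟩ := pivot_aux g 1 one_ne_zero N3
    (fun v hv j => by
      obtain ⟨a, ha⟩ := hsurj (v.1 j)
      exact ⟨a, by rw [hg, Algebra.smul_def, ha, mul_one]⟩)
  simp only [hf] at hd1 hm1 hd2 hm2
  simp only [hg] at hd0 hm0
  have zero3 : ∀ v ∈ N3, (∀ j, v.1 (p0 j) = 0) → v = 0 := by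
    intro v hv hz
    have hv1 : v.1 = 0 := by
      funext j
      by_contra hne
      obtain ⟨c, hc⟩ := hsurj (v.1 j)⁻¹
      exact hm0 v hv hz j ⟨c, by rw [Algebra.smul_def, hc]; exact inv_mul_cancel₀ hne⟩
    obtain ⟨hvN1, hz2⟩ := (memN3 v).1 hv
    refine Prod.ext hv1 (funext fun j => ?_)
    obtain ⟨x, hx⟩ := ev1 v hvN1 j
    by_cases hx0 : algebraMap R K x = 0
    · obtain ⟨y, hy⟩ := hker x hx0
      rw [hx, hy]
      change 2 * (2 * y) = 0
      linear_combination y * h4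
    · obtain ⟨c, y, hcy⟩ := hinv _ hx0
      exfalso
      refine hm2 v ((memN2 v).2 ⟨hvN1, hv1⟩) hz2 j ⟨c, ?_⟩
      rw [hx, smul_eq_mul]
      linear_combination 2 * hcy + y * h4
  choose a ha using fun i j => hsurj ((u1 i).1 (p0 j))
  let w1 : Fin k1 → M := fun i => u1 i - ∑ j, a i j • w0 j
  have hw0N1 : ∀ i, w0 i ∈ N1 := fun i => ((memN3 _).1 (hw0 i)).1
  have hw2N1 : ∀ i, w2 i ∈ N1 := fun i => ((memN2 _).1 (hw2 i)).1
  have z01 : ∀ i j, (w0 i).2 (p1 j) = 0 := fun i => ((memN1 _).1 (hw0N1 i)).2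
  have z02 : ∀ i j, (w0 i).2 (p2 j) = 0 := fun i => ((memN3 _).1 (hw0 i)).2
  have z21 : ∀ i j, (w2 i).2 (p1 j) = 0 := fun i => ((memN1 _).1 (hw2N1 i)).2
  have z20 : ∀ i, (w2 i).1 = 0 := fun i => ((memN2 _).1 (hw2 i)).2
  have c0 : ∀ i, w0 i ∈ C := fun i => ((memN1 _).1 (hw0N1 i)).1
  have c2 : ∀ i, w2 i ∈ C := fun i => ((memN1 _).1 (hw2N1 i)).1
  have c1 : ∀ i, w1 i ∈ C := fun i =>
    C.sub_mem (hu1 i) (C.sum_mem fun j _ => C.smul_mem _ (c0 j))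
  have z10 : ∀ i j, (w1 i).1 (p0 j) = 0 := by
    intro i j
    rw [← hg]
    simp only [w1, map_sub, map_sum, map_smul]
    simp [hg, hd0, Algebra.smul_def, ha]
  have z11 : ∀ i j, (w1 i).2 (p1 j) = if i = j then 1 else 0 := by
    intro i j
    rw [← hf]
    simp only [w1, map_sub, map_sum, map_smul]
    simp [hf, hd1, z01]
  refine ⟨k0, k1, k2, p0, p1, p2, w0, w1, w2, hp0, ?_, hd0, z01, z02,
    fun i => ev1 _ (hw0N1 i), z10, z11, z20, z21, hd2, fun i => ev1 _ (hw2N1 i), ?_⟩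
  · refine hp1.sumElim hp2 ?_
    intro i j hij
    have hh1 := hd2 j j
    rw [← hij, z21] at hh1
    simp at hh1
    exact h2 hh1.symm
  · intro v
    constructor
    · intro hv
      let v1 : M := v - ∑ i, v.2 (p1 i) • w1 i
      have hv1 : v1 ∈ N1 := by
        refine (memN1 _).2 ⟨C.sub_mem hv (C.sum_mem fun j _ => C.smul_mem _ (c1 j)), fun j => ?_⟩
        rw [← hf]
        simp only [v1, map_sub, map_sum, map_smul]
        simp [hf, z11]
      choose b hb using fun j => ev1 v1 hv1 (p2 j)
      let v2 : M := v1 - ∑ i, b i • w2 i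
      have hv2 : v2 ∈ N3 := by
        refine (memN3 _).2 ⟨N1.sub_mem hv1 (N1.sum_mem fun j _ => N1.smul_mem _ (hw2N1 j)),
          fun j => ?_⟩
        rw [← hf]
        simp only [v2, map_sub, map_sum, map_smul]
        simp [hf, hd2, hb, mul_comm]
      choose d hd using fun j => hsurj (v2.1 (p0 j))
      have hv3 : v2 - ∑ i, d i • w0 i = 0 := by
        refine zero3 _ (N3.sub_mem hv2 (N3.sum_mem fun j _ => N3.smul_mem _ (hw0 j))) fun j => ?_
        rw [← hg]
        simp only [map_sub, map_sum, map_smul]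
        simp [hg, hd0, Algebra.smul_def, hd]
      refine ⟨d, fun i => v.2 (p1 i), b, ?_⟩
      rw [← sub_eq_zero, ← hv3]
      simp only [v2, v1]
      abel
    · rintro ⟨d0, d1, d2, rfl⟩
      exact C.add_mem (C.sum_mem fun j _ => C.smul_mem _ (c0 j))
        (C.add_mem (C.sum_mem fun j _ => C.smul_mem _ (c1 j))
          (C.sum_mem fun j _ => C.smul_mem _ (c2 j)))

theorem barR_surj (h : Z4[X]) : Function.Surjective (barR h) := by
  apply Ideal.quotientMap_surjective
  exact Polynomial.map_surjective bar (ZMod.castHom_surjective _)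

theorem bar_ker (x : Z4) : bar x = 0 → ∃ y, x = 2 * y := by
  revert x
  unfold bar
  decide

theorem poly_ker (p : Z4[X]) (hp : p.map bar = 0) : ∃ q : Z4[X], p = 2 * q := by
  have : (C (2 : Z4)) ∣ p := by
    rw [Polynomial.C_dvd_iff_dvd_coeff]
    intro i
    have := congrArg (fun q => q.coeff i) hp
    simp only [Polynomial.coeff_map, Polynomial.coeff_zero] at this
    exact bar_ker _ this
  obtain ⟨q, hq⟩ := this
  exact ⟨q, by rw [hq]; rfl⟩

theorem barR_ker (h : Z4[X]) (x : R4 h) (hx : barR h x = 0) : ∃ y, x = 2 * y := by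
  obtain ⟨p, rfl⟩ := Ideal.Quotient.mk_surjective x
  have hx' : Ideal.Quotient.mk (Ideal.span {h.map bar}) (p.map bar) = 0 := hx
  rw [Ideal.Quotient.eq_zero_iff_mem, Ideal.mem_span_singleton] at hx'
  obtain ⟨q, hq⟩ := hx'
  obtain ⟨q', rfl⟩ := Polynomial.map_surjective bar (ZMod.castHom_surjective _) q
  obtain ⟨t, ht⟩ := poly_ker (p - h * q') (by simp [hq])
  refine ⟨Ideal.Quotient.mk _ t, ?_⟩
  have h0 : Ideal.Quotient.mk (Ideal.span {h}) h = 0 :=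
    Ideal.Quotient.eq_zero_iff_mem.2 (Ideal.mem_span_singleton_self h)
  have := congrArg (Ideal.Quotient.mk (Ideal.span {h})) ht
  rw [map_sub, map_mul, h0, zero_mul, sub_zero, map_mul] at this
  exact this

theorem R4_four (h : Z4[X]) : (4 : R4 h) = 0 := by
  have h4 : (C (4 : Z4)) = 0 := by rw [show (4 : Z4) = 0 from rfl, C_0]
  have := congrArg (Ideal.Quotient.mk (Ideal.span {h})) h4
  rw [map_zero] at this
  exact this

theorem R4_two (h : Z4[X]) (hmon : h.Monic) (hd : 1 ≤ h.natDegree) : (2 : R4 h) ≠ 0 := by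
  intro h2
  have h2' : Ideal.Quotient.mk (Ideal.span {h}) (C (2 : Z4)) = 0 := h2
  rw [Ideal.Quotient.eq_zero_iff_mem, Ideal.mem_span_singleton] at h2'
  refine hmon.not_dvd_of_natDegree_lt ?_ ?_ h2'
  · rw [Ne, C_eq_zero]; decide
  · rw [natDegree_C]; omega

/-- Every `Z₂Z₄[ξ]`-linear code is permutation equivalent to a code
with a generator matrix in standard form. -/
theorem exists_standard_form_generator_matrix
    (m : ℕ) (hm : 1 ≤ m) (h : Z4[X]) (hbp : BasicPrimitive h m)
    (r s : ℕ) (hr : 0 < r) (hs : 0 < s)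
    (C : Set ((Fin r → R2 h) × (Fin s → R4 h))) (hC : IsZ2Z4Linear h C) :
    ∃ k0 k1 k2 : ℕ, IsTypeCode h r s k0 k1 k2 C := by
  obtain ⟨hmon, hdeg, hirr, -⟩ := hbp
  haveI hmax : (Ideal.span {h.map bar}).IsMaximal :=
    PrincipalIdealRing.isMaximal_of_irreducible hirr
  letI : Field (R2 h) := Ideal.Quotient.field _
  letI : Algebra (R4 h) (R2 h) := (barR h).toAlgebra
  have hsm : ∀ {α β : Type} (γ : R4 h) (v : (α → R2 h) × (β → R4 h)),
      smulStar h γ v = γ • v := fun _ _ => rfl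
  let N : Submodule (R4 h) ((Fin r → R2 h) × (Fin s → R4 h)) :=
    { carrier := C
      add_mem' := fun {a b} ha hb => hC.2.1 a ha b hb
      zero_mem' := hC.1
      smul_mem' := fun c v hv => hC.2.2 c v hv }
  obtain ⟨k0, k1, k2, p0, p1, p2, w0, w1, w2, hp0, hp12, d00, z01, z02, ev0, z10, d11, z20, z21,
    d22, ev2, hspan⟩ := standard_aux (R := R4 h) (K := R2 h) (barR_surj h) (barR_ker h)
      (R4_four h) (R4_two h hmon (by omega)) r s N
  obtain ⟨e2, he2⟩ := equiv_aux p0 hp0 (r - k0) (by simp)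
  obtain ⟨e4', he4'⟩ := equiv_aux (Sum.elim p1 p2) hp12 (s - k1 - k2) (by simp; omega)
  let e4 := e4'.trans (Equiv.sumAssoc _ _ _)
  have e41 : ∀ i, e4.symm (.inl i) = p1 i := fun i => he4' (.inl i)
  have e42 : ∀ i, e4.symm (.inr (.inl i)) = p2 i := fun i => he4' (.inr i)
  choose t0 ht0 using ev0
  choose t2 ht2 using ev2
  let perm : ((Fin r → R2 h) × (Fin s → R4 h)) →ₗ[R4 h]
      (((Fin k0 ⊕ Fin (r - k0)) → R2 h) × ((Fin k1 ⊕ Fin k2 ⊕ Fin (s - k1 - k2)) → R4 h)) :=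
    { toFun := fun v => (v.1 ∘ e2.symm, v.2 ∘ e4.symm)
      map_add' := fun _ _ => rfl
      map_smul' := fun _ _ => rfl }
  refine ⟨k0, k1, k2, fun i j => (w0 i).1 (e2.symm (.inr j)),
    fun i j => (w1 i).1 (e2.symm (.inr j)), fun i j => t0 i (e4.symm (.inr (.inr j))),
    fun i j => (w1 i).2 (e4.symm (.inr (.inl j))), fun i j => (w1 i).2 (e4.symm (.inr (.inr j))),
    fun i j => t2 i (e4.symm (.inr (.inr j))), e2, e4, ?_⟩
  have hrows : stdGenRows h (r := r) (s := s) (fun i j => (w0 i).1 (e2.symm (.inr j)))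
    (fun i j => (w1 i).1 (e2.symm (.inr j))) (fun i j => t0 i (e4.symm (.inr (.inr j))))
    (fun i j => (w1 i).2 (e4.symm (.inr (.inl j)))) (fun i j => (w1 i).2 (e4.symm (.inr (.inr j))))
    (fun i j => t2 i (e4.symm (.inr (.inr j)))) =
      fun row => perm (Sum.elim w0 (Sum.elim w1 w2) row) := by
    funext row
    refine Prod.ext (funext fun col => ?_) (funext fun col => ?_)
    · change _ = (Sum.elim w0 (Sum.elim w1 w2) row).1 (e2.symm col)
      rcases row with i | i | i <;> rcases col with j | j <;>
        simp [stdGenRows, he2, d00, z10, z20]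
    · change _ = (Sum.elim w0 (Sum.elim w1 w2) row).2 (e4.symm col)
      rcases row with i | i | i <;> rcases col with j | j | j <;>
        simp [stdGenRows, e41, e42, z01, z02, d11, z21, d22, ← ht0, ← ht2]
  rw [hrows]
  ext v
  change v ∈ perm '' C ↔ ∃ c : Fin k0 ⊕ Fin k1 ⊕ Fin k2 → R4 h,
    v = ∑ i, c i • perm (Sum.elim w0 (Sum.elim w1 w2) i)
  constructor
  · rintro ⟨u, hu, rfl⟩
    obtain ⟨c0, c1, c2, rfl⟩ := (hspan u).1 hu
    refine ⟨Sum.elim c0 (Sum.elim c1 c2), ?_⟩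
    simp only [Fintype.sum_sum_type, Sum.elim_inl, Sum.elim_inr, map_add, map_sum, map_smul]
  · rintro ⟨c, rfl⟩
    refine ⟨_, (hspan _).2 ⟨fun i => c (.inl i), fun i => c (.inr (.inl i)),
      fun i => c (.inr (.inr i)), rfl⟩, ?_⟩
    simp only [Fintype.sum_sum_type, Sum.elim_inl, Sum.elim_inr, map_add, map_sum, map_smul]
end
end

section
/- Let C be a Z₂Z₄[ξ]-linear code of type (r,s;k₀;k₁,k₂) with standard-form generator matrix G = [[I_{k₀}, Ā₀₁ | 0, 0, 2T], [0, S | I_{k₁}, A₀₁, A₀₂], [0, 0 | 0, 2I_{k₂}, 2A₁₂]]. Then the dual code C⊥ is exactly the set of R₄-linear combinations (via *) of the rows of the block matrix H = [[−Ā₀₁ᵀ, I_{r−k₀} | −2Sᵀ, 0, 0], [−Tᵀ, 0 | −A₀₂ᵀ + A₁₂ᵀA₀₁ᵀ, −A₁₂ᵀ, I_{s−k₁−k₂}], [0, 0 | −2A₀₁ᵀ, 2I_{k₂}, 0]], where the first two column blocks (r columns, entries reduced mod 2 where necessary) lie in R₂ and the last three column blocks (of widths k₁, k₂, s−k₁−k₂)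 lie in R₄. -/
set_option synthInstance.maxHeartbeats 1000000
set_option maxHeartbeats 2000000

noncomputable section
open Polynomial

lemma bar_natCast_val (a : Z2) : bar ((a.val : ℕ) : Z4) = a := by
  revert a; decide

lemma z4_two_mul_eq_zero (a : Z4) : 2 * a = 0 ↔ bar a = 0 := by
  revert a; decide

lemma z4_bar_eq_zero (a : Z4) (ha : bar a = 0) : ∃ b : Z4, a = 2 * b := by
  revert a; decide

lemma z4_two_mul_of_bar (a : Z4) (ha : bar a = 0) : 2 * a = 0 :=
  (z4_two_mul_eq_zero a).2 ha

/-- The coefficientwise lift of a polynomial over `Z₂`. -/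
lemma map_bar_lift (q : Z2[X]) :
    (q.sum fun i a => C ((a.val : Z4)) * X ^ i).map bar = q := by
  rw [Polynomial.sum_def, Polynomial.map_sum]
  conv_rhs => rw [q.as_sum_support_C_mul_X_pow]
  refine Finset.sum_congr rfl fun i _ => ?_
  rw [Polynomial.map_mul, Polynomial.map_pow, Polynomial.map_X, Polynomial.map_C,
    bar_natCast_val]

lemma poly_two_mul_eq_zero (p : Z4[X]) : 2 * p = 0 ↔ p.map bar = 0 := by
  have h2 : ∀ n, (2 * p).coeff n = 2 * p.coeff n := fun n => by
    rw [two_mul, Polynomial.coeff_add, two_mul]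
  constructor
  · intro hp
    ext n
    have := h2 n
    rw [hp, Polynomial.coeff_zero] at this
    rw [Polynomial.coeff_map, Polynomial.coeff_zero]
    exact (z4_two_mul_eq_zero _).1 this.symm
  · intro hp
    ext n
    rw [h2, Polynomial.coeff_zero]
    apply (z4_two_mul_eq_zero _).2
    rw [← Polynomial.coeff_map, hp, Polynomial.coeff_zero]

lemma poly_map_eq_zero (p : Z4[X]) (hp : p.map bar = 0) : ∃ t : Z4[X], p = 2 * t := by
  have h1 : ∀ n, ∃ b : Z4, p.coeff n = 2 * b := fun n => z4_bar_eq_zero _ (by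
    rw [← Polynomial.coeff_map, hp, Polynomial.coeff_zero])
  choose b hb using h1
  refine ⟨∑ i ∈ p.support, C (b i) * X ^ i, ?_⟩
  conv_lhs => rw [p.as_sum_support_C_mul_X_pow]
  rw [Finset.mul_sum]
  refine Finset.sum_congr rfl fun i _ => ?_
  rw [hb i, C_mul, ← mul_assoc]
  rfl

lemma barR_mk (h p : Z4[X]) :
    barR h (Ideal.Quotient.mk _ p) = Ideal.Quotient.mk _ (p.map bar) := rfl

lemma barR_iota (h : Z4[X]) (hh : h.Monic) (a : R2 h) : barR h (iota h a) = a := by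
  unfold iota
  rw [barR_mk, map_bar_lift, rep2]
  have h1 : Ideal.Quotient.mk (Ideal.span {h.map bar}) (Quotient.out a) = a :=
    Quotient.out_eq a
  conv_rhs => rw [← h1]
  rw [Ideal.Quotient.mk_eq_mk_iff_sub_mem, Ideal.mem_span_singleton]
  have h2 := Polynomial.modByMonic_add_div (Quotient.out a) (h.map bar)
  refine ⟨-(Quotient.out a /ₘ h.map bar), ?_⟩
  linear_combination h2

lemma barR_eq_zero (h : Z4[X]) (x : R4 h) (hx : barR h x = 0) : ∃ z, x = 2 * z := by
  obtain ⟨p, rfl⟩ := Ideal.Quotient.mk_surjective x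
  rw [barR_mk, Ideal.Quotient.eq_zero_iff_mem, Ideal.mem_span_singleton] at hx
  obtain ⟨q, hq⟩ := hx
  obtain ⟨t, ht⟩ := poly_map_eq_zero
    (p - h * (q.sum fun i a => C ((a.val : Z4)) * X ^ i)) (by
      rw [Polynomial.map_sub, Polynomial.map_mul, map_bar_lift, hq, sub_self])
  refine ⟨Ideal.Quotient.mk _ t, ?_⟩
  rw [← map_ofNat (Ideal.Quotient.mk (Ideal.span {h})) 2, ← map_mul,
    Ideal.Quotient.mk_eq_mk_iff_sub_mem, Ideal.mem_span_singleton]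
  exact ⟨q.sum fun i a => C ((a.val : Z4)) * X ^ i, by linear_combination ht⟩

lemma two_mul_two_mul (h : Z4[X]) (x : R4 h) : 2 * (2 * x) = 0 := by
  obtain ⟨p, rfl⟩ := Ideal.Quotient.mk_surjective x
  rw [← map_ofNat (Ideal.Quotient.mk (Ideal.span {h})) 2, ← map_mul, ← map_mul]
  have : 2 * (2 * p) = 0 := by
    rw [poly_two_mul_eq_zero, Polynomial.map_mul]
    have : (2 : Z4[X]).map bar = 0 := by
      rw [Polynomial.map_ofNat]
      exact CharTwo.two_eq_zero
    rw [this, zero_mul]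
  rw [this, map_zero]

lemma two_mul_eq_zero_iff (h : Z4[X]) (hh : h.Monic) (x : R4 h) :
    2 * x = 0 ↔ barR h x = 0 := by
  constructor
  · obtain ⟨p, rfl⟩ := Ideal.Quotient.mk_surjective x
    intro hx
    rw [← map_ofNat (Ideal.Quotient.mk (Ideal.span {h})) 2, ← map_mul,
      Ideal.Quotient.eq_zero_iff_mem, Ideal.mem_span_singleton] at hx
    obtain ⟨q, hq⟩ := hx
    have h2 : (2 : Z4[X]).map bar = 0 := by
      rw [Polynomial.map_ofNat]
      exact CharTwo.two_eq_zero
    have h3 : h.map bar * q.map bar = 0 := by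
      rw [← Polynomial.map_mul, ← hq, Polynomial.map_mul, h2, zero_mul]
    have h4 : q.map bar = 0 := by
      rcases mul_eq_zero.1 h3 with h5 | h5
      · exact absurd h5 (hh.map bar).ne_zero
      · exact h5
    obtain ⟨t, rfl⟩ := poly_map_eq_zero q h4
    have h5 : 2 * (p - h * t) = 0 := by linear_combination hq
    rw [poly_two_mul_eq_zero, Polynomial.map_sub, Polynomial.map_mul, sub_eq_zero] at h5
    rw [barR_mk, h5, Ideal.Quotient.eq_zero_iff_mem, Ideal.mem_span_singleton]
    exact ⟨_, rfl⟩
  · intro hx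
    obtain ⟨z, rfl⟩ := barR_eq_zero h x hx
    exact two_mul_two_mul h z

/-- The additive map `a ↦ 2 ι(a)` from `R₂` to `R₄`. -/
def dbl (h : Z4[X]) (hh : h.Monic) : R2 h →+ R4 h where
  toFun a := 2 * iota h a
  map_zero' := by rw [two_mul_eq_zero_iff h hh, barR_iota h hh]
  map_add' a b := by
    have : 2 * (iota h (a + b) - (iota h a + iota h b)) = 0 := by
      rw [two_mul_eq_zero_iff h hh, map_sub, map_add, barR_iota h hh, barR_iota h hh,
        barR_iota h hh, sub_self]
    linear_combination this

lemma dbl_apply (h : Z4[X]) (hh : h.Monic) (a : R2 h) : 2 * iota h a = dbl h hh a := rfl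

lemma dbl_barR (h : Z4[X]) (hh : h.Monic) (x : R4 h) : dbl h hh (barR h x) = 2 * x := by
  have : 2 * (iota h (barR h x) - x) = 0 := by
    rw [two_mul_eq_zero_iff h hh, map_sub, barR_iota h hh, sub_self]
  rw [← dbl_apply]
  linear_combination this

lemma dbl_barR_mul (h : Z4[X]) (hh : h.Monic) (x : R4 h) (a : R2 h) :
    dbl h hh (barR h x * a) = x * dbl h hh a := by
  conv_lhs => rw [← barR_iota h hh a, ← map_mul, dbl_barR]
  rw [← dbl_apply]
  ring

lemma dbl_eq_zero (h : Z4[X]) (hh : h.Monic) (a : R2 h) : dbl h hh a = 0 ↔ a = 0 := by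
  rw [← dbl_apply, two_mul_eq_zero_iff h hh, barR_iota h hh]

lemma innerP_eq (h : Z4[X]) (hh : h.Monic) {α β : Type*} [Fintype α] [Fintype β]
    (u v : (α → R2 h) × (β → R4 h)) :
    innerP h u v = ∑ i, dbl h hh (u.1 i * v.1 i) + ∑ j, u.2 j * v.2 j := by
  unfold innerP
  rw [Finset.mul_sum]
  rfl

lemma innerP_smul (h : Z4[X]) (hh : h.Monic) {α β : Type*} [Fintype α] [Fintype β]
    (c : R4 h) (u v : (α → R2 h) × (β → R4 h)) :
    innerP h (smulStar h c u) v = c * innerP h u v := by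
  rw [innerP_eq h hh, innerP_eq h hh, mul_add, Finset.mul_sum, Finset.mul_sum]
  simp only [smulStar, mul_assoc, dbl_barR_mul]

lemma innerP_add (h : Z4[X]) (hh : h.Monic) {α β : Type*} [Fintype α] [Fintype β]
    (u w v : (α → R2 h) × (β → R4 h)) :
    innerP h (u + w) v = innerP h u v + innerP h w v := by
  simp only [innerP_eq h hh, Prod.fst_add, Prod.snd_add, Pi.add_apply, add_mul, map_add,
    Finset.sum_add_distrib]
  ring

lemma innerP_zero (h : Z4[X]) (hh : h.Monic) {α β : Type*} [Fintype α] [Fintype β]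
    (v : (α → R2 h) × (β → R4 h)) : innerP h 0 v = 0 := by
  simp [innerP_eq h hh]

lemma mem_dual_rowSpan (h : Z4[X]) (hh : h.Monic) {ι α β : Type*} [Fintype ι] [Fintype α]
    [Fintype β] (rows : ι → (α → R2 h) × (β → R4 h)) (v : (α → R2 h) × (β → R4 h)) :
    v ∈ dualCode h (rowSpan h rows) ↔ ∀ i, innerP h (rows i) v = 0 := by
  classical
  constructor
  · intro hv i
    apply hv
    refine ⟨Pi.single i 1, ?_⟩
    rw [Finset.sum_eq_single i]
    · ext j <;> simp [smulStar]
    · intro j _ hj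
      ext k <;> simp [smulStar, hj]
    · simp
  · rintro hv u ⟨c, rfl⟩
    have key : ∀ t : Finset ι, innerP h (∑ i ∈ t, smulStar h (c i) (rows i)) v = 0 := by
      intro t
      induction t using Finset.induction_on with
      | empty => rw [Finset.sum_empty, innerP_zero h hh]
      | insert a t ha ih =>
        rw [Finset.sum_insert ha, innerP_add h hh, ih, innerP_smul h hh, hv, mul_zero, add_zero]
    exact key _

lemma fst_sum_apply (h : Z4[X]) {ι α β : Type*} [Fintype ι]
    (f : ι → (α → R2 h) × (β → R4 h)) (a : α) : (∑ i, f i).1 a = ∑ i, (f i).1 a := by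
  have := map_sum ((Pi.evalAddMonoidHom (fun _ : α => R2 h) a).comp
    (AddMonoidHom.fst (α → R2 h) (β → R4 h))) f Finset.univ
  exact this

lemma snd_sum_apply (h : Z4[X]) {ι α β : Type*} [Fintype ι]
    (f : ι → (α → R2 h) × (β → R4 h)) (b : β) : (∑ i, f i).2 b = ∑ i, (f i).2 b := by
  have := map_sum ((Pi.evalAddMonoidHom (fun _ : β => R4 h) b).comp
    (AddMonoidHom.snd (α → R2 h) (β → R4 h))) f Finset.univ
  exact this

lemma sum_mul_neg_comm {R ι : Type*} [CommRing R] [Fintype ι] (a b : ι → R) :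
    ∑ i, a i * -(b i) = -∑ i, b i * a i := by
  rw [← Finset.sum_neg_distrib]
  exact Finset.sum_congr rfl fun i _ => by ring

/-- If `C` has standard form generator matrix `G`, then the dual code
`C⊥` is exactly the `R₄`-span of the rows of the standard form parity-check matrix `H`. -/
theorem dual_eq_span_of_parity_check_rows
    (m : ℕ) (hm : 1 ≤ m) (h : Z4[X]) (hbp : BasicPrimitive h m)
    (r s k0 k1 k2 : ℕ) (hk0 : k0 ≤ r) (hk12 : k1 + k2 ≤ s)
    (A01b : Matrix (Fin k0) (Fin (r - k0)) (R2 h))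
    (S : Matrix (Fin k1) (Fin (r - k0)) (R2 h))
    (T : Matrix (Fin k0) (Fin (s - k1 - k2)) (R4 h))
    (A01 : Matrix (Fin k1) (Fin k2) (R4 h))
    (A02 : Matrix (Fin k1) (Fin (s - k1 - k2)) (R4 h))
    (A12 : Matrix (Fin k2) (Fin (s - k1 - k2)) (R4 h))
    (C : Set (((Fin k0 ⊕ Fin (r - k0)) → R2 h) ×
              ((Fin k1 ⊕ Fin k2 ⊕ Fin (s - k1 - k2)) → R4 h)))
    (hC : C = rowSpan h (stdGenRows h A01b S T A01 A02 A12)) :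
    dualCode h C = rowSpan h (stdParityRows h A01b S T A01 A02 A12) := by
  have hh : h.Monic := hbp.1
  subst hC
  ext v
  rw [mem_dual_rowSpan h hh]
  obtain ⟨d, e⟩ := v
  -- the orthogonality equations
  have E0 : ∀ i, innerP h (stdGenRows h A01b S T A01 A02 A12 (.inl i)) (d, e) =
      dbl h hh (d (.inl i) + ∑ j, A01b i j * d (.inr j)
        + ∑ j, barR h (T i j) * barR h (e (.inr (.inr j)))) := by
    intro i
    have hT : ∀ j, dbl h hh (barR h (T i j) * barR h (e (.inr (.inr j))))
        = 2 * T i j * e (.inr (.inr j)) := fun j => by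
      rw [dbl_barR_mul, dbl_barR]; ring
    have hd : ∑ x, dbl h hh (if i = x then d (.inl x) else 0) = dbl h hh (d (.inl i)) := by
      rw [← map_sum]
      simp
    simp [innerP_eq h hh, stdGenRows, Fintype.sum_sum_type, hT, hd]
  have E1 : ∀ i, innerP h (stdGenRows h A01b S T A01 A02 A12 (.inr (.inl i))) (d, e) =
      ∑ j, dbl h hh (S i j * d (.inr j)) + (e (.inl i) + (∑ j, A01 i j * e (.inr (.inl j))
        + ∑ j, A02 i j * e (.inr (.inr j)))) := by
    intro i
    simp [innerP_eq h hh, stdGenRows, Fintype.sum_sum_type]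
  have E2 : ∀ i, innerP h (stdGenRows h A01b S T A01 A02 A12 (.inr (.inr i))) (d, e) =
      2 * (e (.inr (.inl i)) + ∑ j, A12 i j * e (.inr (.inr j))) := by
    intro i
    simp [innerP_eq h hh, stdGenRows, Fintype.sum_sum_type, mul_add, Finset.mul_sum, mul_assoc]
  -- the components of a combination of parity-check rows
  have F : ∀ c : (Fin (r - k0) ⊕ Fin (s - k1 - k2) ⊕ Fin k2) → R4 h,
      ((d, e) = ∑ i, smulStar h (c i) (stdParityRows h A01b S T A01 A02 A12 i)) ↔
      ((∀ j, d (.inl j) = -(∑ i, A01b j i * barR h (c (.inl i)))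
          - ∑ i, barR h (T j i) * barR h (c (.inr (.inl i)))) ∧
       (∀ j, d (.inr j) = barR h (c (.inl j))) ∧
       (∀ j, e (.inl j) = -(∑ i, dbl h hh (S j i * barR h (c (.inl i))))
          - ∑ i, A02 j i * c (.inr (.inl i))
          + ∑ i, ∑ k, A01 j k * (A12 k i * c (.inr (.inl i)))
          - 2 * ∑ k, A01 j k * c (.inr (.inr k))) ∧
       (∀ j, e (.inr (.inl j)) = -(∑ i, A12 j i * c (.inr (.inl i)))
          + 2 * c (.inr (.inr j))) ∧
       (∀ j, e (.inr (.inr j)) = c (.inr (.inl j)))) := by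
    intro c
    have hS : ∀ j i, dbl h hh (S j i * barR h (c (.inl i)))
        = c (.inl i) * (2 * iota h (S j i)) := fun j i => by
      rw [mul_comm, dbl_barR_mul, ← dbl_apply]
    have hA : ∀ j i k, A01 j k * (A12 k i * c (.inr (.inl i)))
        = c (.inr (.inl i)) * (A12 k i * A01 j k) := fun j i k => by ring
    have n2 : ∀ {n : ℕ} (a b : Fin n → R2 h), ∑ i, a i * -(b i) = -∑ i, b i * a i :=
      fun a b => sum_mul_neg_comm a b
    have n4 : ∀ {n : ℕ} (a b : Fin n → R4 h), ∑ i, a i * -(b i) = -∑ i, b i * a i :=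
      fun a b => sum_mul_neg_comm a b
    rw [Prod.ext_iff, funext_iff, funext_iff, Sum.forall, Sum.forall, Sum.forall, and_assoc]
    simp only [fst_sum_apply, snd_sum_apply]
    simp only [Fintype.sum_sum_type, smulStar,
      stdParityRows, hS, hA]
    refine and_congr (forall_congr' fun j => ?_) (and_congr (forall_congr' fun j => ?_)
      (and_congr (forall_congr' fun j => ?_) (and_congr (forall_congr' fun j => ?_)
        (forall_congr' fun j => ?_))))
    · apply Eq.congr rfl
      simp [n2, sub_eq_add_neg]
    · apply Eq.congr rfl
      simp
    · apply Eq.congr rfl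
      simp only [mul_add, Finset.sum_add_distrib, Finset.mul_sum, n4]
      have a1 : ∑ i, 2 * iota h (S j i) * c (.inl i) = ∑ i, c (.inl i) * (2 * iota h (S j i)) :=
        Finset.sum_congr rfl fun i _ => mul_comm _ _
      have a2 : ∑ i, 2 * (A01 j i * c (.inr (.inr i)))
          = ∑ i, 2 * A01 j i * c (.inr (.inr i)) :=
        Finset.sum_congr rfl fun i _ => by ring
      rw [a1, a2]
      ring
    · apply Eq.congr rfl
      simp only [n4]
      simp [mul_comm]
    · apply Eq.congr rfl
      simp
  have Fm : ((d, e) ∈ rowSpan h (stdParityRows h A01b S T A01 A02 A12)) ↔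
      ∃ c : (Fin (r - k0) ⊕ Fin (s - k1 - k2) ⊕ Fin k2) → R4 h, (d, e) = ∑ i, smulStar h (c i) (stdParityRows h A01b S T A01 A02 A12 i) := Iff.rfl
  rw [Fm, Sum.forall, Sum.forall]
  simp only [E0, E1, E2, F, dbl_eq_zero]
  -- rearrangement of `A₀₁ e₂` for `e₂ = -A₁₂ e₃ + 2 z`
  have R : ∀ (z : Fin k2 → R4 h) (f : Fin (s - k1 - k2) → R4 h) (i : Fin k1),
      ∑ j, A01 i j * (-(∑ l, A12 j l * f l) + 2 * z j)
        = -(∑ l, ∑ j, A01 i j * (A12 j l * f l)) + 2 * ∑ j, A01 i j * z j := by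
    intro z f i
    rw [Finset.sum_comm, Finset.mul_sum, ← Finset.sum_neg_distrib, ← Finset.sum_add_distrib]
    refine Finset.sum_congr rfl fun j _ => ?_
    rw [← Finset.mul_sum]
    ring
  constructor
  · rintro ⟨H0, H1, H2⟩
    have H3 : ∀ i, ∃ z, e (.inr (.inl i)) + ∑ j, A12 i j * e (.inr (.inr j)) = 2 * z :=
      fun i => barR_eq_zero h _ ((two_mul_eq_zero_iff h hh _).1 (H2 i))
    choose z hz using H3
    have hz' : ∀ j, e (.inr (.inl j)) = -(∑ i, A12 j i * e (.inr (.inr i))) + 2 * z j :=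
      fun j => by linear_combination hz j
    refine ⟨Sum.elim (fun j => iota h (d (.inr j)))
      (Sum.elim (fun j => e (.inr (.inr j))) z), ?_, ?_, ?_, ?_, ?_⟩
    · intro j
      simp only [Sum.elim_inl, Sum.elim_inr, barR_iota h hh]
      linear_combination H0 j
    · intro j
      simp only [Sum.elim_inl, barR_iota h hh]
    · intro j
      simp only [Sum.elim_inl, Sum.elim_inr, barR_iota h hh]
      have := H1 j
      simp only [hz', R] at this
      linear_combination this
    · exact hz'
    · intro j
      rfl
  · rintro ⟨c, h1, h2, h3, h4, h5⟩
    refine ⟨fun i => ?_, fun i => ?_, fun i => ?_⟩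
    · rw [h1]
      simp only [h2, h5]
      ring
    · simp only [h2, h3, h4, h5, R]
      ring
    · simp only [h4, h5]
      linear_combination two_mul_two_mul h (c (.inr (.inr i)))
end
end
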